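/- arXiv:2509.14529 — 2 statements merged into one kernel-verified Lean document; each statement's English description precedes it below -/
import Mathlib

section
/- Vanishing Hermite moments force Gaussian law (key step in the proof of Theorem 5.2): Let (Ω, 𝓕, ℙ) be a probability space and ξ : Ω → ℝ a random variable such that for some constant C > 0 one has 𝔼[|ξ|^n] ≤ 2·n!·C^n for every n ∈ ℕ. Let g ∈ ℝ be such that H_n(ξ, g) is integrable and 𝔼[H_n(ξ, g)] = 0 for every integer n ≥ 1. Then g ≤ 0 and the law of ξ equals gaussianReal 0 (−2g). -/
open MeasureTheory ProbabilityTheory Finset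

/-- `H_n(a,b) := ∑_{p+2q=n} a^p b^q / (p! q!)`; `n!·H_n(u,−1/2)` is the `n`-th
probabilists' Hermite polynomial at `u`. -/
noncomputable def hermiteH (n : ℕ) (a b : ℝ) : ℝ :=
  ∑ pq ∈ (Finset.range (n + 1) ×ˢ Finset.range (n + 1)).filter
      (fun pq => pq.1 + 2 * pq.2 = n),
    a ^ pq.1 * b ^ pq.2 / ((Nat.factorial pq.1 : ℝ) * (Nat.factorial pq.2 : ℝ))

/-!
Since `∑ₙ Hₙ(a, b) tⁿ = exp (a t + b t²)`, a Hermite moment in the second parameter `g`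
can be moved to the parameter `g + c` by a finite convolution with the coefficients of `exp (c t²)`.
Taking `c = -g` turns `Hₙ(ξ, g)` into the monomial `ξⁿ / n!`, so the Hermite moments alone give the
integrability of all powers and `𝔼[ξⁿ] / n! = Hₙ(0, -g)`. The even moments then bound
`𝔼[cosh (t ξ)]` for every `t`, so the complex moment generating function of `ξ` is entire, and its
Taylor series sums to that of the Gaussian law, `exp (-g z²)`.
-/

section WeightPairs

/-- The exponent pairs `(p, q)` with `p + 2 * q = n`, which index the sum defining `hermiteH n`;
the finset has the same form as there, so that `hermiteH` unfolds to a sum over it. -/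
def weightPairs (n : ℕ) : Finset (ℕ × ℕ) :=
  {pq ∈ range (n + 1) ×ˢ range (n + 1) | pq.1 + 2 * pq.2 = n}

lemma mem_weightPairs {n : ℕ} {pq : ℕ × ℕ} : pq ∈ weightPairs n ↔ pq.1 + 2 * pq.2 = n := by
  simp only [weightPairs, mem_filter, mem_product, mem_range]
  lia

lemma sum_weightPairs_weightPairs {M : Type*} [AddCommMonoid M] (n : ℕ) (f : ℕ → ℕ → ℕ → M) :
    ∑ mr ∈ weightPairs n, ∑ pq ∈ weightPairs mr.1, f pq.1 pq.2 mr.2 =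
      ∑ ps ∈ weightPairs n, ∑ qr ∈ antidiagonal ps.2, f ps.1 qr.1 qr.2 := by
  simp_rw [sum_sigma']
  refine sum_nbij' (fun x ↦ ⟨(x.2.1, x.2.2 + x.1.2), (x.2.2, x.1.2)⟩)
    (fun x ↦ ⟨(x.1.1 + 2 * x.2.1, x.2.2), (x.1.1, x.2.1)⟩) ?_ ?_ ?_ ?_ ?_ <;>
    rintro ⟨⟨m, r⟩, p, q⟩ <;>
    simp only [mem_sigma, mem_weightPairs, HasAntidiagonal.mem_antidiagonal] <;> grind

lemma hasSum_sum_weightPairs {M : Type*} [AddCommMonoid M] [TopologicalSpace M] [ContinuousAdd M]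
    [RegularSpace M] {f : ℕ × ℕ → M} {a : M} (hf : HasSum f a) :
    HasSum (fun n ↦ ∑ pq ∈ weightPairs n, f pq) a := by
  let weight : ℕ × ℕ → ℕ := fun pq ↦ pq.1 + 2 * pq.2
  refine ((Equiv.sigmaFiberEquiv weight).hasSum_iff.mpr hf).sigma fun n ↦ ?_
  have : HasSum (fun pq : weightPairs n ↦ f pq) _ := (weightPairs n).hasSum f
  exact (Equiv.subtypeEquivRight fun _ ↦ mem_weightPairs).symm.hasSum_iff.mpr this

end WeightPairs

section Hermite

lemma hermiteH_eq_sum_weightPairs (n : ℕ) (a b : ℝ) :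
    hermiteH n a b =
      ∑ pq ∈ weightPairs n, a ^ pq.1 / pq.1.factorial * (b ^ pq.2 / pq.2.factorial) := by
  simp_rw [div_mul_div_comm]
  rfl

lemma hermiteH_zero (a b : ℝ) : hermiteH 0 a b = 1 := by
  simp [hermiteH_eq_sum_weightPairs, show weightPairs 0 = {(0, 0)} by decide]

lemma hermiteH_one (a b : ℝ) : hermiteH 1 a b = a := by
  simp [hermiteH_eq_sum_weightPairs, show weightPairs 1 = {(1, 0)} by decide]

lemma hermiteH_two (a b : ℝ) : hermiteH 2 a b = a ^ 2 / 2 + b := by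
  simp [hermiteH_eq_sum_weightPairs, show weightPairs 2 = {(2, 0), (0, 1)} by decide]

lemma hermiteH_zero_right (n : ℕ) (a : ℝ) : hermiteH n a 0 = a ^ n / n.factorial := by
  have hmem : (n, 0) ∈ weightPairs n := by simp [mem_weightPairs]
  rw [hermiteH_eq_sum_weightPairs, sum_eq_single_of_mem (n, 0) hmem]
  · simp
  · intro pq hpq hne
    have : pq.2 ≠ 0 := by grind [mem_weightPairs]
    simp [this]

lemma hermiteH_zero_zero {n : ℕ} (hn : n ≠ 0) : hermiteH n 0 0 = 0 := by
  simp [hermiteH_zero_right, hn]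

lemma add_pow_div_factorial {K : Type*} [Field K] [CharZero K] (x y : K) (n : ℕ) :
    (x + y) ^ n / n.factorial =
      ∑ ij ∈ antidiagonal n, x ^ ij.1 / ij.1.factorial * (y ^ ij.2 / ij.2.factorial) := by
  rw [(Commute.all x y).add_pow', sum_div]
  refine sum_congr rfl fun ij hij ↦ ?_
  rw [← mem_antidiagonal.mp hij, nsmul_eq_mul, Nat.cast_add_choose]
  have (k : ℕ) : (k.factorial : K) ≠ 0 := mod_cast k.factorial_ne_zero
  field_simp [this]

-- Coefficientwise form of `exp (a t + (b + c) t²) = exp (a t + b t²) * exp (c t²)`.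
lemma hermiteH_add (n : ℕ) (a b c : ℝ) :
    hermiteH n a (b + c) =
      ∑ pq ∈ weightPairs n, hermiteH pq.1 a b * (c ^ pq.2 / pq.2.factorial) := by
  simp_rw [hermiteH_eq_sum_weightPairs, add_pow_div_factorial, mul_sum, sum_mul, mul_assoc]
  exact (sum_weightPairs_weightPairs n fun p q r ↦
    a ^ p / p.factorial * (b ^ q / q.factorial * (c ^ r / r.factorial))).symm

lemma hasSum_hermiteH_mul_pow (a b : ℝ) (z : ℂ) :
    HasSum (fun n ↦ (hermiteH n a b : ℂ) * z ^ n) (Complex.exp (a * z + b * z ^ 2)) := by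
  have hexp (w : ℂ) : HasSum (fun n : ℕ ↦ w ^ n / n.factorial) (Complex.exp w) := by
    rw [Complex.exp_eq_exp_ℂ]
    exact NormedSpace.expSeries_div_hasSum_exp w
  have hnorm (w : ℂ) : Summable fun n : ℕ ↦ ‖w ^ n / n.factorial‖ :=
    NormedSpace.norm_expSeries_div_summable w
  have hsummable := summable_mul_of_summable_norm (hnorm (a * z)) (hnorm (b * z ^ 2))
  have hprod := hasSum_sum_weightPairs ((hexp (a * z)).mul (hexp (b * z ^ 2)) hsummable)
  rw [Complex.exp_add]
  refine hprod.congr_fun fun n ↦ ?_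
  rw [hermiteH_eq_sum_weightPairs]
  push_cast
  rw [sum_mul]
  refine sum_congr rfl fun pq hpq ↦ ?_
  rw [← mem_weightPairs.mp hpq]
  ring

end Hermite

section Moments

variable {Ω : Type*} [MeasurableSpace Ω] {μ : Measure Ω} {X : Ω → ℝ}

lemma integrable_of_summable_integral_norm {ι E : Type*} [Countable ι] [NormedAddCommGroup E]
    {f : ι → Ω → E} {F : Ω → E} (hf : ∀ i, Integrable (f i) μ)
    (hsum : Summable fun i ↦ ∫ ω, ‖f i ω‖ ∂μ) (hF : ∀ᵐ ω ∂μ, HasSum (f · ω) (F ω)) :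
    Integrable F μ := by
  refine ⟨aestronglyMeasurable_of_tendsto_ae Filter.atTop
    (fun s ↦ Finset.aestronglyMeasurable_fun_sum s fun i _ ↦ (hf i).aestronglyMeasurable) hF, ?_⟩
  calc ∫⁻ ω, ‖F ω‖ₑ ∂μ
      ≤ ∫⁻ ω, ∑' i, ‖f i ω‖ₑ ∂μ :=
        lintegral_mono_ae <| hF.mono fun ω hω ↦ hω.tsum_eq ▸ enorm_tsum_le_tsum_enorm
    _ = ∑' i, ENNReal.ofReal (∫ ω, ‖f i ω‖ ∂μ) := by
        rw [lintegral_tsum fun i ↦ (hf i).aestronglyMeasurable.enorm]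
        simp_rw [ofReal_integral_norm_eq_lintegral_enorm (hf _)]
    _ < ⊤ := hsum.tsum_ofReal_lt_top

-- The even moments control `cosh (t X)`, which dominates `exp (t X)`.
lemma integrable_exp_mul_of_summable_even_moments (hX : AEStronglyMeasurable X μ)
    (hint : ∀ k, Integrable (fun ω ↦ X ω ^ (2 * k)) μ) {t : ℝ}
    (hsum : Summable fun k : ℕ ↦ (∫ ω, X ω ^ (2 * k) ∂μ) / (2 * k).factorial * t ^ (2 * k)) :
    Integrable (fun ω ↦ Real.exp (t * X ω)) μ := by
  have hterm (k : ℕ) (ω : Ω) : (t * X ω) ^ (2 * k) / (2 * k).factorial =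
      X ω ^ (2 * k) * (t ^ (2 * k) / (2 * k).factorial) := by ring
  have hcosh : Integrable (fun ω ↦ Real.cosh (t * X ω)) μ := by
    have hseries (ω : Ω) := Real.hasSum_cosh (t * X ω)
    refine integrable_of_summable_integral_norm (fun k ↦ ?_) ?_ (ae_of_all _ hseries)
    · simpa only [hterm] using (hint k).mul_const _
    · refine hsum.congr fun k ↦ ?_
      have hnonneg (ω : Ω) : 0 ≤ (t * X ω) ^ (2 * k) / (2 * k).factorial :=
        div_nonneg ((even_two_mul k).pow_nonneg _) (Nat.cast_nonneg _)
      simp_rw [Real.norm_of_nonneg (hnonneg _), hterm, integral_mul_const]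
      ring
  refine (hcosh.const_mul 2).mono' (by fun_prop) (ae_of_all _ fun ω ↦ ?_)
  rw [Real.norm_of_nonneg (Real.exp_pos _).le, Real.cosh_eq]
  linarith [Real.exp_pos (-(t * X ω))]

lemma hasSum_complexMGF (hX : integrableExpSet X μ = Set.univ) (z : ℂ) :
    HasSum (fun n : ℕ ↦ ((∫ ω, X ω ^ n ∂μ) / n.factorial : ℝ) * z ^ n) (complexMGF X μ z) := by
  have hmem (w : ℂ) : w.re ∈ interior (integrableExpSet X μ) := by simp [hX]
  have hentire : Differentiable ℂ (complexMGF X μ) := fun w ↦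
    (analyticAt_complexMGF (hmem w)).differentiableAt
  have hmoment (n : ℕ) : iteratedDeriv n (complexMGF X μ) 0 = (∫ ω, X ω ^ n ∂μ : ℝ) := by
    rw [iteratedDeriv_complexMGF (hmem 0), ← integral_complex_ofReal]
    simp
  refine (Complex.hasSum_taylorSeries_of_entire hentire 0 z).congr_fun fun n ↦ ?_
  rw [hmoment, sub_zero, smul_eq_mul, smul_eq_mul]
  push_cast
  ring

end Moments

section HermiteMoments

variable {Ω : Type*} [MeasurableSpace Ω] {μ : Measure Ω} {X : Ω → ℝ} {a b g : ℝ}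

lemma integrable_hermiteH_add (hint : ∀ n, Integrable (fun ω ↦ hermiteH n (X ω) g) μ)
    (n : ℕ) (c : ℝ) : Integrable (fun ω ↦ hermiteH n (X ω) (g + c)) μ := by
  simp_rw [hermiteH_add]
  exact integrable_finsetSum _ fun pq _ ↦ (hint pq.1).mul_const _

lemma integral_hermiteH_add (hint : ∀ n, Integrable (fun ω ↦ hermiteH n (X ω) g) μ)
    (hmom : ∀ n, ∫ ω, hermiteH n (X ω) g ∂μ = hermiteH n a b) (n : ℕ) (c : ℝ) :
    ∫ ω, hermiteH n (X ω) (g + c) ∂μ = hermiteH n a (b + c) := by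
  simp_rw [hermiteH_add]
  rw [integral_finsetSum _ fun pq _ ↦ (hint pq.1).mul_const _]
  simp_rw [integral_mul_const, hmom]

lemma integrable_pow_of_integrable_hermiteH
    (hint : ∀ n, Integrable (fun ω ↦ hermiteH n (X ω) g) μ) (n : ℕ) :
    Integrable (fun ω ↦ X ω ^ n) μ := by
  have h := (integrable_hermiteH_add hint n (-g)).mul_const (n.factorial : ℝ)
  simpa [hermiteH_zero_right, Nat.factorial_ne_zero] using h

lemma integral_pow_div_factorial_eq_hermiteH
    (hint : ∀ n, Integrable (fun ω ↦ hermiteH n (X ω) g) μ)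
    (hmom : ∀ n, ∫ ω, hermiteH n (X ω) g ∂μ = hermiteH n a b) (n : ℕ) :
    (∫ ω, X ω ^ n ∂μ) / n.factorial = hermiteH n a (b - g) := by
  have h := integral_hermiteH_add hint hmom n (-g)
  simp_rw [add_neg_cancel, hermiteH_zero_right, integral_div] at h
  rw [h, sub_eq_add_neg]

lemma aestronglyMeasurable_of_integrable_hermiteH_one
    (hint : Integrable (fun ω ↦ hermiteH 1 (X ω) g) μ) : AEStronglyMeasurable X μ := by
  simpa only [hermiteH_one] using hint.aestronglyMeasurable

lemma integrableExpSet_eq_univ_of_integral_hermiteH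
    (hint : ∀ n, Integrable (fun ω ↦ hermiteH n (X ω) g) μ)
    (hmom : ∀ n, ∫ ω, hermiteH n (X ω) g ∂μ = hermiteH n a b) :
    integrableExpSet X μ = Set.univ := by
  refine Set.eq_univ_of_forall fun t ↦ ?_
  refine integrable_exp_mul_of_summable_even_moments
    (aestronglyMeasurable_of_integrable_hermiteH_one (hint 1))
    (fun k ↦ integrable_pow_of_integrable_hermiteH hint (2 * k)) ?_
  simp_rw [integral_pow_div_factorial_eq_hermiteH hint hmom]
  have hseries : Summable fun n ↦ hermiteH n a (b - g) * t ^ n :=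
    mod_cast (hasSum_hermiteH_mul_pow a (b - g) t).summable
  exact hseries.comp_injective (mul_right_injective₀ two_ne_zero)

lemma complexMGF_of_integral_hermiteH
    (hint : ∀ n, Integrable (fun ω ↦ hermiteH n (X ω) g) μ)
    (hmom : ∀ n, ∫ ω, hermiteH n (X ω) g ∂μ = hermiteH n a b) (z : ℂ) :
    complexMGF X μ z = Complex.exp (a * z + (b - g : ℝ) * z ^ 2) := by
  have h := hasSum_complexMGF (integrableExpSet_eq_univ_of_integral_hermiteH hint hmom) z
  simp_rw [integral_pow_div_factorial_eq_hermiteH hint hmom] at h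
  exact h.unique (hasSum_hermiteH_mul_pow a (b - g) z)

lemma le_of_integral_hermiteH [IsProbabilityMeasure μ]
    (hint : ∀ n, Integrable (fun ω ↦ hermiteH n (X ω) g) μ)
    (hmom : ∀ n, ∫ ω, hermiteH n (X ω) g ∂μ = hermiteH n a b) : g ≤ b := by
  have hX := aestronglyMeasurable_of_integrable_hermiteH_one (hint 1)
  have hL2 : MemLp X 2 μ :=
    (memLp_two_iff_integrable_sq hX).mpr (integrable_pow_of_integrable_hermiteH hint 2)
  have hmean : μ[X] = a := by
    simpa [hermiteH_one] using integral_pow_div_factorial_eq_hermiteH hint hmom 1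
  have hsq : μ[X ^ 2] / 2 = a ^ 2 / 2 + (b - g) := by
    simpa [hermiteH_two] using integral_pow_div_factorial_eq_hermiteH hint hmom 2
  have hvar := variance_nonneg X μ
  rw [variance_eq_sub hL2, hmean] at hvar
  linarith

theorem map_eq_gaussianReal_of_integral_hermiteH [IsProbabilityMeasure μ]
    (hint : ∀ n, Integrable (fun ω ↦ hermiteH n (X ω) g) μ)
    (hmom : ∀ n, ∫ ω, hermiteH n (X ω) g ∂μ = hermiteH n a b) :
    μ.map X = gaussianReal a (2 * (b - g)).toNNReal := by
  have hX := (aestronglyMeasurable_of_integrable_hermiteH_one (hint 1)).aemeasurable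
  have hvar : 0 ≤ 2 * (b - g) := by linarith [le_of_integral_hermiteH hint hmom]
  rw [← (gaussianReal a _).map_id]
  refine Measure.ext_of_complexMGF_eq hX aemeasurable_id (funext fun z ↦ ?_)
  rw [complexMGF_of_integral_hermiteH hint hmom, complexMGF_id_gaussianReal,
    Real.coe_toNNReal _ hvar]
  push_cast
  ring_nf

end HermiteMoments

theorem vanishing_hermite_moments_gaussian_general
    {Ω : Type*} [MeasurableSpace Ω] (P : Measure Ω) [IsProbabilityMeasure P] (ξ : Ω → ℝ) (g : ℝ)
    (hherm : ∀ n : ℕ, 1 ≤ n →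
      Integrable (fun ω ↦ hermiteH n (ξ ω) g) P ∧ ∫ ω, hermiteH n (ξ ω) g ∂P = 0) :
    g ≤ 0 ∧ P.map ξ = gaussianReal 0 (-2 * g).toNNReal := by
  have hint (n : ℕ) : Integrable (fun ω ↦ hermiteH n (ξ ω) g) P := by
    rcases n.eq_zero_or_pos with rfl | hn
    · simp [hermiteH_zero]
    · exact (hherm n hn).1
  have hmom (n : ℕ) : ∫ ω, hermiteH n (ξ ω) g ∂P = hermiteH n 0 0 := by
    rcases n.eq_zero_or_pos with rfl | hn
    · simp [hermiteH_zero]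
    · rw [(hherm n hn).2, hermiteH_zero_zero hn.ne']
  refine ⟨le_of_integral_hermiteH hint hmom, ?_⟩
  rw [map_eq_gaussianReal_of_integral_hermiteH hint hmom]
  ring_nf

/-- vanishing Hermite moments force a Gaussian law.  If
`𝔼[|ξ|^n] ≤ 2 n! C^n` for all `n` and `𝔼[H_n(ξ,g)] = 0` for all `n ≥ 1`, then
`g ≤ 0` and the law of `ξ` is `N(0, −2g)`. -/
theorem vanishing_hermite_moments_gaussian
    {Ω : Type*} [MeasurableSpace Ω] (P : Measure Ω) [IsProbabilityMeasure P]
    (ξ : Ω → ℝ) (hξ : Measurable ξ)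
    (C : ℝ) (hC : 0 < C)
    (hmom : ∀ n : ℕ, Integrable (fun ω => |ξ ω| ^ n) P ∧
      (∫ ω, |ξ ω| ^ n ∂P) ≤ 2 * (Nat.factorial n : ℝ) * C ^ n)
    (g : ℝ)
    (hherm : ∀ n : ℕ, 1 ≤ n →
      Integrable (fun ω => hermiteH n (ξ ω) g) P ∧
      (∫ ω, hermiteH n (ξ ω) g ∂P) = 0) :
    g ≤ 0 ∧ Measure.map ξ P = gaussianReal 0 (Real.toNNReal (-2 * g)) :=
  vanishing_hermite_moments_gaussian_general P ξ g hherm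
end

section
/- Kreps–Yan separation lemma (Lemma B.1): Let C ⊆ L^p be a norm-closed convex cone with 0 ∈ C, such that −h ∈ C for every h ∈ L^p_+, and such that C ∩ L^p_+ = {0}. Then for every f ∈ L^p_+ with f ≠ 0 there exists g ∈ L^q with g ≥ 0 ℙ-a.e., ⟨h, g⟩ ≤ 0 for every h ∈ C, and ⟨f, g⟩ > 0. (Since C is convex, norm closedness is equivalent to closedness in the weak topology used in the paper.) -/
open MeasureTheory

/-!
Hahn–Banach separates `f` from the closed cone `C` by a continuous functional `φ` that is
nonpositive on `C`, hence nonnegative on `L^p_+ ⊆ -C`. It remains to represent `φ` by some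
`g ∈ L^q`, and then `g ≥ 0` because `∫_s g = φ(1_s) ≥ 0` for every measurable `s`.

For the representation, `s ↦ φ(1_s)` is a signed measure absolutely continuous with respect to `μ`,
and `g` is its Radon–Nikodym density, a priori only integrable. If `p > 1`, the truncation
`1_{|g| ≤ n} g` represents `f ↦ φ(1_{|g| ≤ n} f)`, so its `L^q` norm is at most `‖φ‖` by the
equality case of Hölder's inequality, and Fatou's lemma gives `g ∈ L^q`. If `p = 1`, the bound
`|∫_s g| ≤ ‖φ‖ μ(s)` gives `|g| ≤ ‖φ‖` almost everywhere.
-/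

open Filter Topology
open scoped ENNReal Function symmDiff

theorem exists_nonneg_dual_separating {E : Type*} [AddCommGroup E] [Preorder E]
    [TopologicalSpace E] [IsTopologicalAddGroup E] [Module ℝ E] [ContinuousSMul ℝ E]
    [LocallyConvexSpace ℝ E] (C : ProperCone ℝ E) (hneg : ∀ h, 0 ≤ h → -h ∈ C) {f : E}
    (hf : f ∉ C) :
    ∃ φ : StrongDual ℝ E, (∀ h, 0 ≤ h → 0 ≤ φ h) ∧ (∀ h ∈ C, φ h ≤ 0) ∧ 0 < φ f := by
  obtain ⟨ψ, hψC, hψf⟩ := C.hyperplane_separation_point hf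
  exact ⟨-ψ, fun h hh ↦ by simpa using hψC _ (hneg h hh), fun h hh ↦ by simpa using hψC h hh,
    by simpa using hψf⟩

section LpDuality

variable {Ω : Type*} [MeasurableSpace Ω] {μ : Measure Ω} {p q : ℝ≥0∞}

section VectorMeasure

variable {E : Type*} [NormedAddCommGroup E]

lemma sum_indicatorConstLp {ι : Type*} {s : ι → Set Ω} (hs : ∀ i, MeasurableSet (s i))
    (hμs : ∀ i, μ (s i) ≠ ∞) (hd : Pairwise (Disjoint on s)) (F : Finset ι) (c : E) :
    ∑ i ∈ F, indicatorConstLp p (hs i) (hμs i) c =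
      indicatorConstLp p (F.measurableSet_biUnion fun i _ ↦ hs i)
        (measure_biUnion_lt_top F.finite_toSet fun i _ ↦ (hμs i).lt_top).ne c := by
  classical
  induction F using Finset.induction_on with
  | empty => simp
  | insert i F hi ih =>
    have hdisj : Disjoint (s i) (⋃ j ∈ F, s j) :=
      Set.disjoint_iUnion₂_right.2 fun j hj ↦ hd (ne_of_mem_of_not_mem hj hi).symm
    simp only [Finset.sum_insert hi, ih, Finset.set_biUnion_insert]
    exact (indicatorConstLp_disjoint_union (hs i) _ (hμs i) _ hdisj c).symm

lemma tendsto_measure_biUnion_symmDiff_iUnion [IsFiniteMeasure μ] {s : ℕ → Set Ω}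
    (hs : ∀ i, MeasurableSet (s i)) (hd : Pairwise (Disjoint on s)) :
    Tendsto (fun F : Finset ℕ ↦ μ ((⋃ i ∈ F, s i) ∆ ⋃ i, s i)) atTop (𝓝 0) := by
  have hdiff (F : Finset ℕ) :
      μ ((⋃ i ∈ F, s i) ∆ ⋃ i, s i) = μ (⋃ i, s i) - ∑ i ∈ F, μ (s i) := by
    have hsub : ⋃ i ∈ F, s i ⊆ ⋃ i, s i := Set.iUnion₂_subset fun i _ ↦ Set.subset_iUnion s i
    rw [symmDiff_of_le hsub, measure_sdiff hsub
      (F.measurableSet_biUnion fun i _ ↦ hs i).nullMeasurableSet (measure_ne_top μ _),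
      measure_biUnion_finset (fun i _ j _ hij ↦ hd hij) fun i _ ↦ hs i]
  have hsum : Tendsto (fun F : Finset ℕ ↦ ∑ i ∈ F, μ (s i)) atTop (𝓝 (μ (⋃ i, s i))) := by
    rw [measure_iUnion hd hs]
    exact ENNReal.summable.hasSum
  simp only [hdiff]
  rw [← tsub_self (μ (⋃ i, s i))]
  exact ENNReal.Tendsto.sub tendsto_const_nhds hsum (.inl (measure_ne_top μ _))

variable [Fact (1 ≤ p)]

open Classical in
/-- The `L^p`-valued vector measure `s ↦ 1_s · c`. -/
noncomputable def indicatorVectorMeasure (μ : Measure Ω) [IsFiniteMeasure μ] (hp : p ≠ ∞) (c : E) :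
    VectorMeasure Ω (Lp E p μ) where
  measureOf' s := if hs : MeasurableSet s then indicatorConstLp p hs (measure_ne_top μ s) c else 0
  empty' := by simp
  not_measurable' _ hs := dif_neg hs
  m_iUnion' s hs hd := by
    simp only [hs, MeasurableSet.iUnion hs, dif_pos]
    simp only [HasSum, SummationFilter.unconditional_filter,
      sum_indicatorConstLp hs (fun i ↦ measure_ne_top μ (s i)) hd]
    exact tendsto_indicatorConstLp_set hp (tendsto_measure_biUnion_symmDiff_iUnion hs hd)

lemma indicatorVectorMeasure_apply [IsFiniteMeasure μ] (hp : p ≠ ∞) (c : E) {s : Set Ω}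
    (hs : MeasurableSet s) :
    indicatorVectorMeasure μ hp c s = indicatorConstLp p hs (measure_ne_top μ s) c :=
  dif_pos hs

end VectorMeasure

lemma norm_rpow_toReal_eq_integral {E : Type*} [NormedAddCommGroup E] (hp₀ : p ≠ 0) (hp : p ≠ ∞)
    (f : Lp E p μ) : ‖f‖ ^ p.toReal = ∫ ω, ‖f ω‖ ^ p.toReal ∂μ := by
  rw [Lp.norm_def, toReal_eLpNorm (Lp.aestronglyMeasurable f),
    lpNorm_eq_integral_norm_rpow_toReal hp₀ hp (Lp.aestronglyMeasurable f),
    Real.rpow_inv_rpow (by positivity) (ENNReal.toReal_ne_zero.2 ⟨hp₀, hp⟩)]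

lemma mul_ofReal_toReal_sub_one [ENNReal.HolderConjugate p q] (hp : p ≠ ∞) (hq : q ≠ ∞) :
    p * ENNReal.ofReal (q.toReal - 1) = q := by
  have hp₀ : p ≠ 0 := ENNReal.HolderConjugate.ne_zero p q
  rw [ENNReal.ofReal_sub _ zero_le_one, ENNReal.ofReal_toReal hq, ENNReal.ofReal_one,
    ← ENNReal.HolderConjugate.div_conj_eq_sub_one (p := q) (q := p), ENNReal.mul_div_cancel hp₀ hp]

lemma ae_norm_le_of_forall_abs_setIntegral_le [IsFiniteMeasure μ] {g : Ω → ℝ} {c : ℝ}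
    (hg : Integrable g μ) (h : ∀ s, MeasurableSet s → |∫ ω in s, g ω ∂μ| ≤ c * μ.real s) :
    ∀ᵐ ω ∂μ, ‖g ω‖ ≤ c := by
  have hc (s : Set Ω) : ∫ _ in s, c ∂μ = c * μ.real s := by
    rw [setIntegral_const, smul_eq_mul, mul_comm]
  have hle : g ≤ᵐ[μ] fun _ ↦ c :=
    ae_le_of_forall_setIntegral_le hg (integrable_const c) fun s hs _ ↦
      (le_abs_self _).trans ((h s hs).trans_eq (hc s).symm)
  have hge : -g ≤ᵐ[μ] fun _ ↦ c :=
    ae_le_of_forall_setIntegral_le hg.neg (integrable_const c) fun s hs _ ↦ by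
      rw [integral_neg', hc]
      exact (neg_le_abs _).trans (h s hs)
  filter_upwards [hle, hge] with ω h₁ h₂
  exact abs_le'.2 ⟨h₁, h₂⟩

lemma memLp_of_forall_eLpNorm_indicator_norm_le {E : Type*} [NormedAddCommGroup E] {g : Ω → E}
    (hg : StronglyMeasurable g) {c : ℝ≥0∞} (hc : c ≠ ∞)
    (h : ∀ n : ℕ, eLpNorm ({ω | ‖g ω‖ ≤ n}.indicator g) p μ ≤ c) : MemLp g p μ := by
  have hmeas (n : ℕ) : AEStronglyMeasurable ({ω | ‖g ω‖ ≤ n}.indicator g) μ :=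
    (hg.indicator (measurableSet_le hg.norm.measurable measurable_const)).aestronglyMeasurable
  have hlim (ω : Ω) :
      Tendsto (fun n : ℕ ↦ {ω | ‖g ω‖ ≤ n}.indicator g ω) atTop (𝓝 (g ω)) := by
    refine tendsto_const_nhds.congr' ?_
    filter_upwards [eventually_ge_atTop ⌈‖g ω‖⌉₊] with n hn
    exact (Set.indicator_of_mem (s := {ω | ‖g ω‖ ≤ n}) (Nat.ceil_le.1 hn) g).symm
  refine ⟨hg.aestronglyMeasurable, lt_of_le_of_lt ?_ hc.lt_top⟩
  calc eLpNorm g p μ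
      ≤ liminf (fun n : ℕ ↦ eLpNorm ({ω | ‖g ω‖ ≤ n}.indicator g) p μ) atTop :=
        Lp.eLpNorm_lim_le_liminf_eLpNorm hmeas g (.of_forall hlim)
    _ ≤ c := liminf_le_of_frequently_le' (.of_forall h)

lemma integral_indicatorConstLp_one_mul {s : Set Ω} (hs : MeasurableSet s) (hμs : μ s ≠ ∞)
    (g : Ω → ℝ) : ∫ ω, indicatorConstLp p hs hμs (1 : ℝ) ω * g ω ∂μ = ∫ ω in s, g ω ∂μ := by
  rw [← integral_indicator hs]
  refine integral_congr_ae ?_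
  filter_upwards [indicatorConstLp_coeFn (p := p) (hs := hs) (hμs := hμs) (c := (1 : ℝ))] with ω hω
  by_cases hωs : ω ∈ s <;> simp [hω, hωs]

variable [Fact (1 ≤ p)]

lemma exists_setIntegral_eq_apply_indicatorConstLp [IsFiniteMeasure μ] (hp : p ≠ ∞)
    (φ : StrongDual ℝ (Lp ℝ p μ)) :
    ∃ g : Lp ℝ 1 μ, ∀ ⦃s⦄ (hs : MeasurableSet s),
      φ (indicatorConstLp p hs (measure_ne_top μ s) 1) = ∫ ω in s, g ω ∂μ := by
  let ν : SignedMeasure Ω := (indicatorVectorMeasure μ hp (1 : ℝ)).mapRange φ φ.continuous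
  have hν ⦃s⦄ (hs : MeasurableSet s) :
      ν s = φ (indicatorConstLp p hs (measure_ne_top μ s) 1) :=
    congrArg φ (indicatorVectorMeasure_apply hp 1 hs)
  have hνμ : ν ≪ᵥ μ.toENNRealVectorMeasure := by
    refine .mk fun s hs hμs ↦ ?_
    rw [Measure.toENNRealVectorMeasure_apply_measurable hs] at hμs
    have : indicatorConstLp p hs (measure_ne_top μ s) (1 : ℝ) = 0 := by
      rw [← indicatorConstLp_empty (c := (1 : ℝ)), indicatorConstLp_inj hs _ .empty _ one_ne_zero]
      exact ae_eq_empty.2 hμs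
    rw [hν hs, this, map_zero]
  have hint : Integrable (ν.rnDeriv μ) μ := SignedMeasure.integrable_rnDeriv ν μ
  refine ⟨hint.toL1 _, fun s hs ↦ ?_⟩
  have hνg : ν s = ∫ ω in s, ν.rnDeriv μ ω ∂μ := by
    rw [← withDensityᵥ_apply hint hs, SignedMeasure.withDensityᵥ_rnDeriv_eq ν μ hνμ]
  rw [← hν hs, hνg]
  exact integral_congr_ae (ae_restrict_of_ae hint.coeFn_toL1.symm)

lemma continuousLinearMap_ext_indicatorConstLp {F : Type*} [AddCommGroup F] [Module ℝ F]
    [TopologicalSpace F] [T2Space F] (hp : p ≠ ∞) {φ ψ : Lp ℝ p μ →L[ℝ] F}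
    (h : ∀ ⦃s⦄ (hs : MeasurableSet s) (hμs : μ s ≠ ∞),
      φ (indicatorConstLp p hs hμs 1) = ψ (indicatorConstLp p hs hμs 1)) : φ = ψ := by
  ext f
  induction f using Lp.induction hp with
  | @indicatorConst c s hs hμs =>
    have hsmul : indicatorConstLp p hs hμs.ne c = c • indicatorConstLp p hs hμs.ne (1 : ℝ) := by
      rw [indicatorConstLp, indicatorConstLp, ← MemLp.toLp_const_smul]
      congr 1
      ext ω
      by_cases hω : ω ∈ s <;> simp [hω]
    rw [Lp.simpleFunc.coe_indicatorConst, hsmul, map_smul, map_smul, h]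
  | add _ _ _ hf hg => rw [map_add, map_add, hf, hg]
  | isClosed => exact isClosed_eq φ.continuous ψ.continuous

variable (p) in
/-- Multiplication by `1_s` as a continuous linear operator on `L^p`; for `s = {|g| ≤ n}` it
truncates a function `g`. -/
noncomputable def indicatorMulL {s : Set Ω} (hs : MeasurableSet s) (hμs : μ s ≠ ∞) :
    Lp ℝ p μ →L[ℝ] Lp ℝ p μ :=
  (ContinuousLinearMap.mul ℝ ℝ).holderL μ ∞ p p (indicatorConstLp ∞ hs hμs 1)

lemma norm_indicatorMulL_le {s : Set Ω} (hs : MeasurableSet s) (hμs : μ s ≠ ∞) :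
    ‖indicatorMulL p hs hμs‖ ≤ 1 := by
  refine (ContinuousLinearMap.le_opNorm _ _).trans (mul_le_one₀ ?_ (norm_nonneg _) ?_)
  · exact ContinuousLinearMap.norm_holderL_le _ |>.trans (by simp)
  · simpa using norm_indicatorConstLp_le (p := ∞) (hs := hs) (hμs := hμs) (c := (1 : ℝ))

lemma indicatorMulL_indicatorConstLp {s t : Set Ω} (hs : MeasurableSet s) (hμs : μ s ≠ ∞)
    (ht : MeasurableSet t) (hμt : μ t ≠ ∞) :
    indicatorMulL p hs hμs (indicatorConstLp p ht hμt 1) =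
      indicatorConstLp p (ht.inter hs) (measure_inter_ne_top_of_left_ne_top hμt) 1 := by
  ext1
  refine (ContinuousLinearMap.coeFn_holder _ _ _).trans ?_
  filter_upwards [indicatorConstLp_coeFn (p := ∞) (hs := hs) (hμs := hμs) (c := (1 : ℝ)),
    indicatorConstLp_coeFn (p := p) (hs := ht) (hμs := hμt) (c := (1 : ℝ)),
    indicatorConstLp_coeFn (p := p) (hs := ht.inter hs)
      (hμs := measure_inter_ne_top_of_left_ne_top hμt) (c := (1 : ℝ))] with ω h₁ h₂ h₃
  rw [h₁, h₂, h₃, Set.inter_comm, ← Set.indicator_indicator]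
  by_cases hω : ω ∈ s <;> simp [hω]

variable [Fact (1 ≤ q)] [ENNReal.HolderConjugate p q]

variable (μ p q) in
/-- The canonical map `L^q → (L^p)*`, `g ↦ (f ↦ ∫ f g)`. -/
noncomputable def lpToDual : Lp ℝ q μ →L[ℝ] StrongDual ℝ (Lp ℝ p μ) :=
  ((ContinuousLinearMap.mul ℝ ℝ).lpPairing μ p q).flip

lemma lpToDual_apply (g : Lp ℝ q μ) (f : Lp ℝ p μ) :
    lpToDual μ p q g f = ∫ ω, f ω * g ω ∂μ :=
  ContinuousLinearMap.lpPairing_eq_integral _ f g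

lemma lpToDual_indicatorConstLp_one (g : Lp ℝ q μ) {s : Set Ω} (hs : MeasurableSet s)
    (hμs : μ s ≠ ∞) :
    lpToDual μ p q g (indicatorConstLp p hs hμs 1) = ∫ ω in s, g ω ∂μ :=
  (lpToDual_apply _ _).trans (integral_indicatorConstLp_one_mul hs hμs g)

lemma exists_norm_eq_rpow_and_lpToDual_apply_eq_rpow (hp : p ≠ ∞) (hq : q ≠ ∞) (g : Lp ℝ q μ) :
    ∃ f : Lp ℝ p μ, ‖f‖ = ‖g‖ ^ (q.toReal - 1) ∧ lpToDual μ p q g f = ‖g‖ ^ q.toReal := by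
  have hr : 0 < q.toReal - 1 :=
    sub_pos.2 (ENNReal.HolderConjugate.toReal_of_ne_top hp hq).symm.lt
  -- The case of equality in Hölder's inequality.
  let f₀ : Ω → ℝ := fun ω ↦ ‖g ω‖ ^ (q.toReal - 2) * g ω
  have hnorm (ω : Ω) : ‖g ω‖ ^ (q.toReal - 2) * ‖g ω‖ = ‖g ω‖ ^ (q.toReal - 1) := by
    rw [← Real.rpow_add_one' (norm_nonneg _) (by linarith)]
    congr 1
    ring
  have hmul (ω : Ω) : f₀ ω * g ω = ‖g ω‖ ^ q.toReal := by
    rw [mul_assoc, ← abs_mul_abs_self, ← Real.norm_eq_abs, ← mul_assoc, hnorm,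
      ← Real.rpow_add_one' (norm_nonneg _) (by linarith), sub_add_cancel]
  have heLp : eLpNorm f₀ p μ = eLpNorm g q μ ^ (q.toReal - 1) := by
    rw [eLpNorm_congr_norm_ae (g := fun ω ↦ ‖g ω‖ ^ (q.toReal - 1)), eLpNorm_norm_rpow _ hr,
      mul_ofReal_toReal_sub_one hp hq]
    refine .of_forall fun ω ↦ ?_
    rw [norm_mul, Real.norm_of_nonneg (Real.rpow_nonneg (norm_nonneg _) _), hnorm,
      Real.norm_of_nonneg (Real.rpow_nonneg (norm_nonneg _) _)]
  have hf₀ : MemLp f₀ p μ := by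
    refine ⟨?_, heLp ▸ ENNReal.rpow_lt_top_of_nonneg hr.le (Lp.eLpNorm_ne_top g)⟩
    have := (Lp.stronglyMeasurable g).measurable
    exact (by fun_prop : Measurable f₀).aestronglyMeasurable
  refine ⟨hf₀.toLp f₀, ?_, ?_⟩
  · rw [Lp.norm_toLp, heLp, ← ENNReal.toReal_rpow, Lp.norm_def]
  · rw [lpToDual_apply, norm_rpow_toReal_eq_integral (ENNReal.HolderConjugate.ne_zero q p) hq]
    exact integral_congr_ae (hf₀.coeFn_toLp.mono fun ω hω ↦ by simp only [hω, hmul])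

lemma norm_le_norm_lpToDual (hp : p ≠ ∞) (hq : q ≠ ∞) (g : Lp ℝ q μ) :
    ‖g‖ ≤ ‖lpToDual μ p q g‖ := by
  obtain ⟨f, hf, hfg⟩ := exists_norm_eq_rpow_and_lpToDual_apply_eq_rpow (p := p) hp hq g
  obtain hg | hg := (norm_nonneg g).eq_or_lt
  · rw [← hg]
    exact norm_nonneg _
  refine le_of_mul_le_mul_right ?_ (Real.rpow_pos_of_pos hg (q.toReal - 1))
  calc ‖g‖ * ‖g‖ ^ (q.toReal - 1) = ‖g‖ ^ q.toReal := by
        rw [Real.rpow_sub_one hg.ne', mul_div_cancel₀ _ hg.ne']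
    _ = lpToDual μ p q g f := hfg.symm
    _ ≤ ‖lpToDual μ p q g‖ * ‖f‖ :=
        (Real.le_norm_self _).trans (ContinuousLinearMap.le_opNorm _ f)
    _ = ‖lpToDual μ p q g‖ * ‖g‖ ^ (q.toReal - 1) := by rw [hf]

variable [IsFiniteMeasure μ]

lemma eLpNorm_indicator_le_of_forall_apply_indicatorConstLp_eq (hp : p ≠ ∞) (hq : q ≠ ∞)
    {φ : StrongDual ℝ (Lp ℝ p μ)} {g : Ω → ℝ} (hg : AEStronglyMeasurable g μ)
    (h : ∀ ⦃s⦄ (hs : MeasurableSet s),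
      φ (indicatorConstLp p hs (measure_ne_top μ s) 1) = ∫ ω in s, g ω ∂μ)
    {s : Set Ω} (hs : MeasurableSet s) {c : ℝ} (hgs : ∀ ω ∈ s, ‖g ω‖ ≤ c) :
    eLpNorm (s.indicator g) q μ ≤ ENNReal.ofReal ‖φ‖ := by
  have hmem : MemLp (s.indicator g) q μ := by
    refine .of_bound (hg.indicator hs) (max c 0) (.of_forall fun ω ↦ ?_)
    by_cases hω : ω ∈ s
    · simpa [hω] using .inl (hgs ω hω)
    · simp [hω]
  have hφ : lpToDual μ p q (hmem.toLp _) = φ.comp (indicatorMulL p hs (measure_ne_top μ s)) := by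
    refine continuousLinearMap_ext_indicatorConstLp hp fun t ht hμt ↦ ?_
    rw [ContinuousLinearMap.comp_apply, indicatorMulL_indicatorConstLp, h,
      lpToDual_indicatorConstLp_one, ← setIntegral_indicator hs]
    exact integral_congr_ae (ae_restrict_of_ae hmem.coeFn_toLp)
  rw [← ENNReal.ofReal_toReal hmem.eLpNorm_ne_top, ← Lp.norm_toLp _ hmem]
  refine ENNReal.ofReal_le_ofReal ?_
  calc ‖hmem.toLp _‖ ≤ ‖lpToDual μ p q (hmem.toLp _)‖ := norm_le_norm_lpToDual hp hq _
    _ ≤ ‖φ‖ * ‖indicatorMulL p hs (measure_ne_top μ s)‖ := hφ ▸ φ.opNorm_comp_le _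
    _ ≤ ‖φ‖ := mul_le_of_le_one_right (norm_nonneg φ) (norm_indicatorMulL_le hs _)

lemma memLp_of_forall_apply_indicatorConstLp_eq (hp : p ≠ ∞) {φ : StrongDual ℝ (Lp ℝ p μ)}
    {g : Lp ℝ 1 μ} (h : ∀ ⦃s⦄ (hs : MeasurableSet s),
      φ (indicatorConstLp p hs (measure_ne_top μ s) 1) = ∫ ω in s, g ω ∂μ) :
    MemLp g q μ := by
  have hg : StronglyMeasurable g := Lp.stronglyMeasurable g
  have hgi : Integrable g μ := L1.integrable_coeFn g
  obtain rfl | hq := eq_or_ne q ∞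
  · obtain rfl : p = 1 := (ENNReal.HolderConjugate.eq_top_iff_eq_one ∞ p).1 rfl
    refine memLp_top_of_bound hgi.1 ‖φ‖ (ae_norm_le_of_forall_abs_setIntegral_le hgi fun s hs ↦ ?_)
    calc |∫ ω in s, g ω ∂μ| = ‖φ (indicatorConstLp 1 hs (measure_ne_top μ s) 1)‖ := by
          rw [h hs, Real.norm_eq_abs]
      _ ≤ ‖φ‖ * ‖indicatorConstLp 1 hs (measure_ne_top μ s) (1 : ℝ)‖ := φ.le_opNorm _
      _ = ‖φ‖ * μ.real s := by
          rw [norm_indicatorConstLp one_ne_zero ENNReal.one_ne_top]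
          simp
  · exact memLp_of_forall_eLpNorm_indicator_norm_le hg ENNReal.ofReal_ne_top fun n ↦
      eLpNorm_indicator_le_of_forall_apply_indicatorConstLp_eq hp hq hg.aestronglyMeasurable h
        (measurableSet_le hg.norm.measurable measurable_const) fun _ ↦ id

theorem surjective_lpToDual (hp : p ≠ ∞) : Function.Surjective (lpToDual μ p q) := by
  intro φ
  obtain ⟨g, hg⟩ := exists_setIntegral_eq_apply_indicatorConstLp hp φ
  have hgq : MemLp g q μ := memLp_of_forall_apply_indicatorConstLp_eq hp hg
  refine ⟨hgq.toLp g, continuousLinearMap_ext_indicatorConstLp hp fun s hs hμs ↦ ?_⟩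
  rw [lpToDual_indicatorConstLp_one, hg hs]
  exact integral_congr_ae (ae_restrict_of_ae hgq.coeFn_toLp)

lemma nonneg_of_forall_lpToDual_nonneg {g : Lp ℝ q μ}
    (h : ∀ f : Lp ℝ p μ, 0 ≤ f → 0 ≤ lpToDual μ p q g f) : 0 ≤ g := by
  refine (Lp.coeFn_nonneg g).1 (ae_nonneg_of_forall_setIntegral_nonneg
    ((Lp.memLp g).integrable Fact.out) fun s hs hμs ↦ ?_)
  rw [← lpToDual_indicatorConstLp_one (p := p) g hs hμs.ne]
  refine h _ ((Lp.coeFn_nonneg _).1 ?_)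
  filter_upwards [indicatorConstLp_coeFn (p := p) (hs := hs) (hμs := hμs.ne) (c := (1 : ℝ))]
    with ω hω
  rw [hω]
  exact Set.indicator_nonneg (fun _ _ ↦ zero_le_one) ω

theorem kreps_yan_separation_general (hp : p ≠ ∞) (C : ProperCone ℝ (Lp ℝ p μ))
    (hneg : ∀ h : Lp ℝ p μ, 0 ≤ h → -h ∈ C) {f : Lp ℝ p μ} (hf : f ∉ C) :
    ∃ g : Lp ℝ q μ, 0 ≤ g ∧ (∀ h ∈ C, ∫ ω, h ω * g ω ∂μ ≤ 0) ∧ 0 < ∫ ω, f ω * g ω ∂μ := by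
  obtain ⟨φ, hφ, hφC, hφf⟩ := exists_nonneg_dual_separating C hneg hf
  obtain ⟨g, rfl⟩ := surjective_lpToDual (q := q) hp φ
  simp only [lpToDual_apply] at hφC hφf
  exact ⟨g, nonneg_of_forall_lpToDual_nonneg hφ, hφC, hφf⟩

end LpDuality

/-- Kreps–Yan separation lemma.  Let `C ⊆ L^p` be a norm-closed
convex cone containing `0` and `−L^p_+`, with `C ∩ L^p_+ = {0}`.  Then every
`0 ≠ f ∈ L^p_+` can be separated: there is `g ∈ L^q`, `g ≥ 0` a.e., with
`⟨h,g⟩ ≤ 0` for all `h ∈ C` and `⟨f,g⟩ > 0`. -/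
theorem kreps_yan_separation
    {Ω : Type*} [MeasurableSpace Ω] (P : Measure Ω) [IsProbabilityMeasure P]
    (p q : ℝ) (hp : 1 < p) (hq : 1 ≤ q) (hpq : 1 / p + 1 / q = 1)
    [Fact (1 ≤ ENNReal.ofReal p)] [Fact (1 ≤ ENNReal.ofReal q)]
    (C : Set (Lp ℝ (ENNReal.ofReal p) P))
    (hclosed : IsClosed C)
    (hzero : (0 : Lp ℝ (ENNReal.ofReal p) P) ∈ C)
    (hadd : ∀ x ∈ C, ∀ y ∈ C, x + y ∈ C)
    (hsmul : ∀ c : ℝ, 0 ≤ c → ∀ x ∈ C, c • x ∈ C)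
    (hneg : ∀ h : Lp ℝ (ENNReal.ofReal p) P,
      (0 : Ω → ℝ) ≤ᵐ[P] (h : Ω → ℝ) → -h ∈ C)
    (hpos : ∀ h ∈ C, (0 : Ω → ℝ) ≤ᵐ[P] (h : Ω → ℝ) → h = 0) :
    ∀ f : Lp ℝ (ENNReal.ofReal p) P,
      (0 : Ω → ℝ) ≤ᵐ[P] (f : Ω → ℝ) → f ≠ 0 →
      ∃ g : Lp ℝ (ENNReal.ofReal q) P,
        ((0 : Ω → ℝ) ≤ᵐ[P] (g : Ω → ℝ)) ∧
        (∀ h ∈ C, (∫ ω, (h : Ω → ℝ) ω * (g : Ω → ℝ) ω ∂P) ≤ 0) ∧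
        0 < ∫ ω, (f : Ω → ℝ) ω * (g : Ω → ℝ) ω ∂P := by
  intro f hf hf₀
  have := (Real.holderConjugate_iff.2 ⟨hp, by simpa using hpq⟩).ennrealOfReal
  let K : ProperCone ℝ (Lp ℝ (ENNReal.ofReal p) P) :=
    { carrier := C
      add_mem' := fun {x y} hx hy ↦ hadd x hx y hy
      zero_mem' := hzero
      smul_mem' := fun c x hx ↦ hsmul c c.2 x hx
      isClosed' := hclosed }
  obtain ⟨g, hg, hgC, hgf⟩ := kreps_yan_separation_general (q := ENNReal.ofReal q)
    ENNReal.ofReal_ne_top K (fun h hh ↦ hneg h ((Lp.coeFn_nonneg h).2 hh))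
    (fun hfC ↦ hf₀ (hpos f hfC hf))
  exact ⟨g, (Lp.coeFn_nonneg g).2 hg, hgC, hgf⟩
end
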